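/- (Stars and Stripes Lemma) Let G be a graph with n vertices, let k be an integer with 0 ≤ k ≤ n such that M_k(G) ≥ k, and let r, s be integers with r ≥ k, s ≥ k, and r + s = n − M_k(G) + k. Then there exists a real symmetric matrix A ∈ S(G) with partial inertia (r,s). -/

import Mathlib

open Matrix

/-- Number of positive eigenvalues (with multiplicity) of a real symmetric matrix. -/
noncomputable def posIn {m : ℕ} {A : Matrix (Fin m) (Fin m) ℝ} (hA : A.IsHermitian) : ℕ :=
  Finset.card (Finset.univ.filter fun i => 0 < hA.eigenvalues i)

/-- Number of negative eigenvalues (with multiplicity) of a real symmetric matrix. -/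
noncomputable def negIn {m : ℕ} {A : Matrix (Fin m) (Fin m) ℝ} (hA : A.IsHermitian) : ℕ :=
  Finset.card (Finset.univ.filter fun i => hA.eigenvalues i < 0)

/-- `A` has partial inertia `(r, s)`. -/
def HasInertia {m : ℕ} (A : Matrix (Fin m) (Fin m) ℝ) (r s : ℕ) : Prop :=
  ∃ hA : A.IsHermitian, posIn hA = r ∧ negIn hA = s

/-- `A` is a real symmetric matrix whose off-diagonal zero–nonzero pattern is
given by the edges of the graph `G`. -/
def SMat {m : ℕ} (G : SimpleGraph (Fin m)) (A : Matrix (Fin m) (Fin m) ℝ) : Prop :=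
  A.IsSymm ∧ ∀ i j : Fin m, i ≠ j → (A i j ≠ 0 ↔ G.Adj i j)

/-- The maximal disconnection of `G` by `k` vertices: the maximum number of
connected components of an induced subgraph of `G` on `n - k` vertices. -/
noncomputable def MD {n : ℕ} (G : SimpleGraph (Fin n)) (k : ℕ) : ℕ :=
  Finset.sup (Finset.univ.filter fun s : Finset (Fin n) => s.card = n - k)
    fun s => Nat.card (SimpleGraph.induce (↑s : Set (Fin n)) G).ConnectedComponent

/-!
Let `S` be a set of `n - k` vertices whose induced subgraph has `M_k(G)` components, and let `F` be
`G` without the edges that leave `S`, so that `F` has at least `M_k(G) + k` components.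

*Stripes.* The Laplacian form of `F`, with arbitrary signs on its edges, is invariant under
translation by functions that are constant on the components of `F`, so its rank is at most
`n - M_k(G) - k`. It has no positive index when all signs are negative and no negative index when
all are positive, and changing the sign of one edge changes the positive index by at most one.
Hence some choice of signs gives a positive index at most `r - k` and a negative index at most
`s - k`.

*Stars.* The edges that leave `S` contribute a form that vanishes on vectors supported in `S`, so
restoring them raises each index by at most `k`.

Finally, as long as the form is degenerate, adding `x_i ^ 2` or `-x_i ^ 2`, where `i` is in the
support of a radical vector, raises the chosen index by exactly one and leaves the other fixed.
-/

section Signature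

open Module QuadraticMap

variable {𝕜 M W : Type*} [Field 𝕜] [AddCommGroup M] [Module 𝕜 M] [AddCommGroup W] [Module 𝕜 W]
  {Q Q' : QuadraticForm 𝕜 M}

theorem radical_add_linMulLin_self_lt [NeZero (2 : 𝕜)] (f : M →ₗ[𝕜] 𝕜) {x : M} (hx : x ∈ Q.radical)
    (hfx : f x ≠ 0) : (Q + linMulLin f f).radical < Q.radical := by
  have hker : ∀ y ∈ (Q + linMulLin f f).radical, f y = 0 := by
    intro y hy
    rw [mem_radical_iff'] at hx hy
    have hxy := hy.2 x
    have hy0 := hy.1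
    simp only [_root_.add_apply, linMulLin_apply, map_add, add_comm y x, hx.2 y, hx.1] at hxy hy0
    have h2 : 2 * f x * f y = 0 := by linear_combination hxy - hy0
    simpa [hfx, two_ne_zero] using h2
  refine SetLike.lt_iff_le_and_exists.mpr ⟨fun y hy ↦ ?_, x, hx, fun hx' ↦ hfx (hker x hx')⟩
  have hfy := hker y hy
  rw [mem_radical_iff'] at hy ⊢
  simpa [hfy] using hy

variable [LinearOrder 𝕜] [FiniteDimensional 𝕜 M]

theorem sigPos_le_sigPos_add_finrank [FiniteDimensional 𝕜 W] (g : M →ₗ[𝕜] W)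
    (h : ∀ x, g x = 0 → Q x ≤ Q' x) : sigPos Q ≤ sigPos Q' + finrank 𝕜 W := by
  obtain ⟨P, hP, hpos⟩ := exists_finrank_eq_sigPos_and_posDef Q
  set K : Submodule 𝕜 M := (g.domRestrict P).ker.map P.subtype with hK
  have hKpos : (Q'.restrict K).PosDef := by
    rintro ⟨x, hx⟩ hx0
    obtain ⟨y, hy, rfl⟩ := hx
    have hy0 : y ≠ 0 := fun hy0 ↦ hx0 (by simp [hy0])
    exact (hpos y hy0).trans_le (h _ (LinearMap.mem_ker.mp hy))
  have hle : finrank 𝕜 K ≤ sigPos Q' := le_sigPos_of_posDef Q' hKpos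
  have hrank := (g.domRestrict P).finrank_range_add_finrank_ker
  have hrange := (g.domRestrict P).range.finrank_le
  rw [hK, Submodule.finrank_map_subtype_eq] at hle
  lia

theorem sigPos_mono (h : ∀ x, Q x ≤ Q' x) : sigPos Q ≤ sigPos Q' := by
  simpa using sigPos_le_sigPos_add_finrank (0 : M →ₗ[𝕜] Fin 0 → 𝕜) fun x _ ↦ h x

theorem sigPos_eq_zero_of_nonpos (h : ∀ x, Q x ≤ 0) : sigPos Q = 0 := by
  have := QuadraticForm.sigPos_add_finrank_le_of_nonpos (Q := Q) (V := ⊤) fun x _ ↦ h x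
  rw [finrank_top] at this
  lia

variable [IsStrictOrderedRing 𝕜]

theorem sigNeg_le_sigNeg_add_finrank [FiniteDimensional 𝕜 W] (g : M →ₗ[𝕜] W)
    (h : ∀ x, g x = 0 → Q' x ≤ Q x) : sigNeg Q ≤ sigNeg Q' + finrank 𝕜 W :=
  sigPos_le_sigPos_add_finrank g fun x hx ↦ neg_le_neg (h x hx)

theorem sigNeg_anti (h : ∀ x, Q' x ≤ Q x) : sigNeg Q ≤ sigNeg Q' :=
  sigPos_mono fun x ↦ neg_le_neg (h x)

theorem sigNeg_eq_zero_of_nonneg (h : ∀ x, 0 ≤ Q x) : sigNeg Q = 0 :=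
  sigPos_eq_zero_of_nonpos fun x ↦ neg_nonpos.mpr (h x)

theorem sigPos_sigNeg_add_linMulLin_self (f : M →ₗ[𝕜] 𝕜) {x : M} (hx : x ∈ Q.radical)
    (hfx : f x ≠ 0) :
    sigPos (Q + linMulLin f f) = sigPos Q + 1 ∧ sigNeg (Q + linMulLin f f) = sigNeg Q := by
  have hpos : sigPos (Q + linMulLin f f) ≤ sigPos Q + finrank 𝕜 𝕜 :=
    sigPos_le_sigPos_add_finrank f fun y hy ↦ by simp [hy]
  have hneg : sigNeg (Q + linMulLin f f) ≤ sigNeg Q :=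
    sigNeg_anti fun y ↦ le_add_of_nonneg_right (mul_self_nonneg (f y))
  have hrad := Submodule.finrank_lt_finrank_of_lt (radical_add_linMulLin_self_lt f hx hfx)
  have hQ := QuadraticForm.sigPos_add_sigNeg_add_radical (Q := Q)
  have hQf := QuadraticForm.sigPos_add_sigNeg_add_radical (Q := Q + linMulLin f f)
  rw [finrank_self] at hpos
  lia

end Signature

section Northeast

open Module QuadraticMap

variable {𝕜 V : Type*} [Field 𝕜] [LinearOrder 𝕜] [IsStrictOrderedRing 𝕜] [Fintype V]
  {Q : QuadraticForm 𝕜 (V → 𝕜)}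

theorem exists_sigPos_add_weightedSumSquares_eq_succ (h : sigPos Q + sigNeg Q < Fintype.card V) :
    ∃ d : V → 𝕜, sigPos (Q + weightedSumSquares 𝕜 d) = sigPos Q + 1 ∧
      sigNeg (Q + weightedSumSquares 𝕜 d) = sigNeg Q := by
  classical
  have hrad : Q.radical ≠ ⊥ := by
    intro hbot
    have := QuadraticForm.sigPos_add_sigNeg_add_radical (Q := Q)
    rw [hbot, finrank_bot, finrank_fintype_fun_eq_card] at this
    lia
  obtain ⟨x, hx, hx0⟩ := Submodule.exists_mem_ne_zero_of_ne_bot hrad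
  obtain ⟨i, hi⟩ := Function.ne_iff.mp hx0
  refine ⟨Pi.single i 1, ?_⟩
  have hsingle : weightedSumSquares 𝕜 (Pi.single i (1 : 𝕜)) =
      linMulLin (LinearMap.proj i) (LinearMap.proj i) := by
    ext y
    simp [weightedSumSquares_apply, Pi.single_apply]
  rw [hsingle]
  exact sigPos_sigNeg_add_linMulLin_self _ hx hi

theorem exists_sigNeg_add_weightedSumSquares_eq_succ (h : sigPos Q + sigNeg Q < Fintype.card V) :
    ∃ d : V → 𝕜, sigPos (Q + weightedSumSquares 𝕜 d) = sigPos Q ∧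
      sigNeg (Q + weightedSumSquares 𝕜 d) = sigNeg Q + 1 := by
  obtain ⟨d, hpos, hneg⟩ := exists_sigPos_add_weightedSumSquares_eq_succ (Q := -Q)
    (by simpa [add_comm] using h)
  have hd : -(Q + weightedSumSquares 𝕜 (-d)) = -Q + weightedSumSquares 𝕜 d := by
    ext x
    simp [weightedSumSquares_apply, add_comm]
  refine ⟨-d, ?_, ?_⟩
  · rw [← sigNeg_neg, hd, hneg, sigNeg_neg]
  · rw [← sigPos_neg, hd, hpos, sigPos_neg]

theorem exists_weightedSumSquares_sigPos_sigNeg_eq {p q : ℕ} (hp : sigPos Q ≤ p)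
    (hq : sigNeg Q ≤ q) (hpq : p + q ≤ Fintype.card V) :
    ∃ d : V → 𝕜, sigPos (Q + weightedSumSquares 𝕜 d) = p ∧
      sigNeg (Q + weightedSumSquares 𝕜 d) = q := by
  have hadd (d e : V → 𝕜) : Q + weightedSumSquares 𝕜 (d + e) =
      Q + weightedSumSquares 𝕜 d + weightedSumSquares 𝕜 e := by
    ext x
    simp [weightedSumSquares_apply, add_mul, Finset.sum_add_distrib, add_assoc]
  induction p, hp using Nat.le_induction with
  | base =>
    induction q, hq using Nat.le_induction with
    | base =>
      have hzero : weightedSumSquares 𝕜 (0 : V → 𝕜) = 0 := by ext; simp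
      exact ⟨0, by rw [hzero, add_zero], by rw [hzero, add_zero]⟩
    | succ q _ ih =>
      obtain ⟨d, hdp, hdq⟩ := ih (by lia)
      obtain ⟨e, hep, heq⟩ := exists_sigNeg_add_weightedSumSquares_eq_succ
        (Q := Q + weightedSumSquares 𝕜 d) (by lia)
      exact ⟨d + e, by rw [hadd, hep, hdp], by rw [hadd, heq, hdq]⟩
  | succ p _ ih =>
    obtain ⟨d, hdp, hdq⟩ := ih (by lia)
    obtain ⟨e, hep, heq⟩ := exists_sigPos_add_weightedSumSquares_eq_succ
      (Q := Q + weightedSumSquares 𝕜 d) (by lia)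
    exact ⟨d + e, by rw [hadd, hep, hdp], by rw [hadd, heq, hdq]⟩

end Northeast

section MatrixForms

open QuadraticMap

variable {V R : Type*} [Fintype V] [DecidableEq V] [CommRing R]

theorem toQuadraticForm'_apply (A : Matrix V V R) (x : V → R) :
    A.toQuadraticForm' x = x ⬝ᵥ A *ᵥ x :=
  toLinearMap₂'_apply' A x x

theorem toQuadraticForm'_add (A B : Matrix V V R) :
    (A + B).toQuadraticForm' = A.toQuadraticForm' + B.toQuadraticForm' := by
  ext x
  simp [toQuadraticForm'_apply, add_mulVec, dotProduct_add]

theorem toQuadraticForm'_diagonal (d : V → R) :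
    (diagonal d).toQuadraticForm' = weightedSumSquares R d := by
  ext x
  simp only [toQuadraticForm'_apply, weightedSumSquares_apply, mulVec_diagonal, dotProduct,
    smul_eq_mul]
  exact Finset.sum_congr rfl fun i _ ↦ by ring

theorem equivalent_weightedSumSquares_eigenvalues {A : Matrix V V ℝ} (hA : A.IsHermitian) :
    A.toQuadraticForm'.Equivalent (weightedSumSquares ℝ hA.eigenvalues) := by
  let U : Matrix V V ℝ := hA.eigenvectorUnitary
  refine ⟨UnitaryGroup.toLinearEquiv (star hA.eigenvectorUnitary), fun x ↦ ?_⟩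
  calc weightedSumSquares ℝ hA.eigenvalues (Uᵀ *ᵥ x)
    _ = (Uᵀ *ᵥ x) ⬝ᵥ diagonal hA.eigenvalues *ᵥ (Uᵀ *ᵥ x) := by
      rw [← toQuadraticForm'_diagonal, toQuadraticForm'_apply]
    _ = x ⬝ᵥ (U * diagonal hA.eigenvalues * Uᵀ) *ᵥ x := by
      rw [← mulVec_mulVec, ← mulVec_mulVec, dotProduct_mulVec x, mulVec_transpose U x]
    _ = x ⬝ᵥ A *ᵥ x := by
      conv_rhs => rw [hA.spectral_theorem]
      rfl
    _ = A.toQuadraticForm' x := (toQuadraticForm'_apply A x).symm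

theorem hasInertia_sigPos_sigNeg {m : ℕ} {A : Matrix (Fin m) (Fin m) ℝ} (hA : A.IsSymm) :
    HasInertia A (sigPos A.toQuadraticForm') (sigNeg A.toQuadraticForm') := by
  have hHerm : A.IsHermitian := hA
  have hequiv := equivalent_weightedSumSquares_eigenvalues hHerm
  refine ⟨hHerm, ?_, ?_⟩
  · rw [QuadraticForm.sigPos_of_equiv_weightedSumSquares hequiv, posIn, ← Set.ncard_coe_finset,
      Finset.coe_filter_univ]
  · rw [QuadraticForm.sigNeg_of_equiv_weightedSumSquares hequiv, negIn, ← Set.ncard_coe_finset,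
      Finset.coe_filter_univ]

end MatrixForms

section Graphs

open Module SimpleGraph

variable {V R : Type*}

/-- The matrix `A` is symmetric and its nonzero off-diagonal entries are exactly those indexed by
the edges of `G`. This is `SMat` over an arbitrary index type and coefficient type. -/
def HasGraph [Zero R] (A : Matrix V V R) (G : SimpleGraph V) : Prop :=
  A.IsSymm ∧ ∀ i j : V, i ≠ j → (A i j ≠ 0 ↔ G.Adj i j)

theorem HasGraph.add_diagonal [DecidableEq V] [AddZeroClass R] {A : Matrix V V R}
    {G : SimpleGraph V} (hA : HasGraph A G) (d : V → R) : HasGraph (A + diagonal d) G :=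
  ⟨hA.1.add (isSymm_diagonal d), fun i j hij ↦ by simpa [hij] using hA.2 i j hij⟩

theorem HasGraph.add_adjMatrix [AddMonoidWithOne R] [NeZero (1 : R)] {A : Matrix V V R}
    {F D : SimpleGraph V} [DecidableRel D.Adj] (hA : HasGraph A F) (hFD : Disjoint F D) :
    HasGraph (A + D.adjMatrix R) (F ⊔ D) := by
  refine ⟨hA.1.add (isSymm_adjMatrix _), fun i j hij ↦ ?_⟩
  have hAij := hA.2 i j hij
  rw [Matrix.add_apply, adjMatrix_apply, sup_adj]
  by_cases hD : D.Adj i j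
  · have hF : ¬F.Adj i j := fun hF ↦ hFD.le_bot (show (F ⊓ D).Adj i j from ⟨hF, hD⟩)
    have hzero : A i j = 0 := by simpa [hF] using hAij
    simp [hzero, hD]
  · simp [hD, hAij]

variable [Field R] [LinearOrder R] [IsStrictOrderedRing R] [Fintype V] [DecidableEq V]

theorem HasGraph.exists_sigPos_eq_sigNeg_eq {A : Matrix V V R} {G : SimpleGraph V}
    (hA : HasGraph A G) {p q : ℕ} (hp : sigPos A.toQuadraticForm' ≤ p)
    (hq : sigNeg A.toQuadraticForm' ≤ q) (hpq : p + q ≤ Fintype.card V) :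
    ∃ B : Matrix V V R, HasGraph B G ∧ sigPos B.toQuadraticForm' = p ∧
      sigNeg B.toQuadraticForm' = q := by
  obtain ⟨d, hdp, hdq⟩ := exists_weightedSumSquares_sigPos_sigNeg_eq hp hq hpq
  rw [← toQuadraticForm'_diagonal, ← toQuadraticForm'_add] at hdp hdq
  exact ⟨_, hA.add_diagonal d, hdp, hdq⟩

theorem sigPos_sigNeg_add_adjMatrix_le (A : Matrix V V R) {G : SimpleGraph V} [DecidableRel G.Adj]
    {C : Set V} (hC : IsVertexCover G C) :
    sigPos (A + G.adjMatrix R).toQuadraticForm' ≤ sigPos A.toQuadraticForm' + C.ncard ∧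
      sigNeg (A + G.adjMatrix R).toQuadraticForm' ≤ sigNeg A.toQuadraticForm' + C.ncard := by
  classical
  have hagree (x : V → R) (hx : LinearMap.funLeft R R ((↑) : C → V) x = 0) :
      (A + G.adjMatrix R).toQuadraticForm' x = A.toQuadraticForm' x := by
    have hxC (i : V) (hi : i ∈ C) : x i = 0 := congrFun hx ⟨i, hi⟩
    have hzero : x ⬝ᵥ G.adjMatrix R *ᵥ x = 0 := by
      rw [dotProduct_mulVec_adjMatrix]
      refine Finset.sum_eq_zero fun i _ ↦ Finset.sum_eq_zero fun j _ ↦ ?_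
      split_ifs with hij
      · rcases hC hij with hi | hj
        · rw [hxC i hi, zero_mul]
        · rw [hxC j hj, mul_zero]
      · rfl
    rw [toQuadraticForm'_add, _root_.add_apply,
      toQuadraticForm'_apply (G.adjMatrix R), hzero, add_zero]
  have hfin : finrank R (C → R) = C.ncard := by
    rw [finrank_fintype_fun_eq_card, ← Nat.card_eq_fintype_card, Nat.card_coe_set_eq]
  rw [← hfin]
  exact ⟨sigPos_le_sigPos_add_finrank _ fun x hx ↦ (hagree x hx).le,
    sigNeg_le_sigNeg_add_finrank _ fun x hx ↦ (hagree x hx).ge⟩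

theorem HasGraph.exists_of_isVertexCover {A : Matrix V V R} {F G : SimpleGraph V}
    (hA : HasGraph A F) (hFG : F ≤ G) {C : Set V} (hC : IsVertexCover (G \ F) C) :
    ∃ B : Matrix V V R, HasGraph B G ∧
      sigPos B.toQuadraticForm' ≤ sigPos A.toQuadraticForm' + C.ncard ∧
      sigNeg B.toQuadraticForm' ≤ sigNeg A.toQuadraticForm' + C.ncard := by
  classical
  have hB : HasGraph (A + (G \ F).adjMatrix R) (F ⊔ G \ F) :=
    hA.add_adjMatrix disjoint_sdiff_self_right
  rw [sup_sdiff_cancel_right hFG] at hB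
  exact ⟨_, hB, sigPos_sigNeg_add_adjMatrix_le A hC⟩

end Graphs

section SignedLaplacian

open Module SimpleGraph

variable {V : Type*} [Fintype V] [DecidableEq V] {F H : SimpleGraph V}

open Classical in
/-- For `H ≤ F`, the Laplacian matrix of the signed graph `F` whose negative edges are the edges
of `H`: the off-diagonal entries are `1` on `H`, `-1` on `F \ H` and `0` elsewhere. -/
noncomputable def signedLapMatrix (F H : SimpleGraph V) : Matrix V V ℝ :=
  F.lapMatrix ℝ - (2 : ℝ) • H.lapMatrix ℝ

theorem hasGraph_signedLapMatrix (hHF : H ≤ F) : HasGraph (signedLapMatrix F H) F := by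
  classical
  refine ⟨(isSymm_lapMatrix ℝ F).sub ((isSymm_lapMatrix ℝ H).smul 2), fun i j hij ↦ ?_⟩
  by_cases hH : H.Adj i j
  · norm_num [signedLapMatrix, lapMatrix, degMatrix, hij, hH, hHF hH]
  · simp [signedLapMatrix, lapMatrix, degMatrix, hij, hH]

open Classical in
theorem toQuadraticForm'_signedLapMatrix_apply (x : V → ℝ) :
    (signedLapMatrix F H).toQuadraticForm' x =
      (∑ i, ∑ j, if F.Adj i j then (x i - x j) ^ 2 else 0) / 2 -
        ∑ i, ∑ j, if H.Adj i j then (x i - x j) ^ 2 else 0 := by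
  rw [toQuadraticForm'_apply, signedLapMatrix, sub_mulVec, dotProduct_sub, smul_mulVec,
    dotProduct_smul, ← toLinearMap₂'_apply', ← toLinearMap₂'_apply', lapMatrix_toLinearMap₂',
    lapMatrix_toLinearMap₂']
  simp [mul_div_cancel₀]

theorem sigPos_signedLapMatrix_self : sigPos (signedLapMatrix F F).toQuadraticForm' = 0 := by
  classical
  refine sigPos_eq_zero_of_nonpos fun x ↦ ?_
  have : 0 ≤ ∑ i, ∑ j, if F.Adj i j then (x i - x j) ^ 2 else 0 := by positivity
  rw [toQuadraticForm'_signedLapMatrix_apply]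
  linarith

theorem sigNeg_signedLapMatrix_bot : sigNeg (signedLapMatrix F ⊥).toQuadraticForm' = 0 := by
  refine sigNeg_eq_zero_of_nonneg fun x ↦ ?_
  rw [toQuadraticForm'_signedLapMatrix_apply]
  simp only [bot_adj, if_false, Finset.sum_const_zero, sub_zero]
  positivity

theorem sigPos_sigNeg_signedLapMatrix_add_card_connectedComponent_le (hHF : H ≤ F) :
    sigPos (signedLapMatrix F H).toQuadraticForm' + sigNeg (signedLapMatrix F H).toQuadraticForm' +
      Nat.card F.ConnectedComponent ≤ Fintype.card V := by
  classical
  have hker : (F.lapMatrix ℝ).toLin'.ker ≤ (signedLapMatrix F H).toQuadraticForm'.radical := by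
    intro x hx
    have hxF : ∀ i j, F.Adj i j → x i = x j := (lapMatrix_mulVec_eq_zero_iff_forall_adj F).mp hx
    have hadd (y : V → ℝ) : (signedLapMatrix F H).toQuadraticForm' (x + y) =
        (signedLapMatrix F H).toQuadraticForm' y := by
      have hdiff {i j : V} (hij : F.Adj i j) : (x + y) i - (x + y) j = y i - y j := by
        simp [hxF i j hij]
      simp +contextual only [toQuadraticForm'_signedLapMatrix_apply, hdiff, hHF _]
    exact QuadraticMap.mem_radical_iff'.mpr ⟨by simpa using hadd 0, hadd⟩
  rw [Nat.card_eq_fintype_card, card_connectedComponent_eq_finrank_ker_toLin'_lapMatrix,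
    ← finrank_fintype_fun_eq_card ℝ,
    ← QuadraticForm.sigPos_add_sigNeg_add_radical (Q := (signedLapMatrix F H).toQuadraticForm')]
  exact Nat.add_le_add_left (Submodule.finrank_mono hker) _

theorem sigPos_signedLapMatrix_deleteEdges_le (u v : V) :
    sigPos (signedLapMatrix F (H.deleteEdges {s(u, v)})).toQuadraticForm' ≤
      sigPos (signedLapMatrix F H).toQuadraticForm' + 1 := by
  rw [← finrank_self ℝ]
  refine sigPos_le_sigPos_add_finrank (.proj u - .proj v : (V → ℝ) →ₗ[ℝ] ℝ) fun x hx ↦ ?_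
  have huv : x u = x v := by simpa [sub_eq_zero] using hx
  simp only [toQuadraticForm'_signedLapMatrix_apply]
  gcongr with i _ j _
  split_ifs with hH hH'
  · rfl
  · have hij : s(i, j) = s(u, v) :=
      by_contra fun hij ↦ hH' (deleteEdges_adj.mpr ⟨hH, hij⟩)
    have hxij : x i = x j := by
      rcases Sym2.eq_iff.mp hij with ⟨rfl, rfl⟩ | ⟨rfl, rfl⟩
      exacts [huv, huv.symm]
    rw [hxij, sub_self, zero_pow two_ne_zero]
  · positivity
  · rfl

theorem exists_signedLapMatrix_sigPos_le_sigNeg_le {p q : ℕ}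
    (h : Fintype.card V ≤ p + q + Nat.card F.ConnectedComponent) :
    ∃ H ≤ F, sigPos (signedLapMatrix F H).toQuadraticForm' ≤ p ∧
      sigNeg (signedLapMatrix F H).toQuadraticForm' ≤ q := by
  obtain ⟨H, hH⟩ := exists_minimal_of_wellFoundedLT
    (fun H : SimpleGraph V ↦ H ≤ F ∧ sigPos (signedLapMatrix F H).toQuadraticForm' ≤ p)
    ⟨F, le_rfl, sigPos_signedLapMatrix_self.trans_le p.zero_le⟩
  obtain ⟨⟨hHF, hHp⟩, hmin⟩ := hH
  refine ⟨H, hHF, hHp, ?_⟩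
  obtain rfl | hH := eq_or_ne H ⊥
  · exact sigNeg_signedLapMatrix_bot.trans_le q.zero_le
  · obtain ⟨u, v, huv⟩ := ne_bot_iff_exists_adj.mp hH
    have hle : H.deleteEdges {s(u, v)} ≤ H := deleteEdges_le _
    have hp : p < sigPos (signedLapMatrix F (H.deleteEdges {s(u, v)})).toQuadraticForm' := by
      by_contra! hp
      have := hmin ⟨hle.trans hHF, hp⟩ hle huv
      simp [deleteEdges_adj] at this
    have hdel := sigPos_signedLapMatrix_deleteEdges_le (F := F) (H := H) u v
    have hcard := sigPos_sigNeg_signedLapMatrix_add_card_connectedComponent_le hHF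
    lia

end SignedLaplacian

section Components

open SimpleGraph

theorem card_connectedComponent_induce_add_ncard_compl_le {V : Type*} [Finite V]
    (G : SimpleGraph V) (S : Set V) :
    Nat.card (G.induce S).ConnectedComponent + Sᶜ.ncard ≤
      Nat.card (G.induce S).spanningCoe.ConnectedComponent := by
  classical
  let f (v : V) : (G.induce S).ConnectedComponent ⊕ ↥Sᶜ :=
    if hv : v ∈ S then .inl ((G.induce S).connectedComponentMk ⟨v, hv⟩) else .inr ⟨v, hv⟩
  have hadj (u v : V) (huv : (G.induce S).spanningCoe.Adj u v) : f u = f v := by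
    simp only [map_adj, comap_adj, Function.Embedding.subtype_apply, Subtype.exists] at huv
    obtain ⟨u, hu, v, hv, hG, rfl, rfl⟩ := huv
    have : (G.induce S).Adj ⟨u, hu⟩ ⟨v, hv⟩ := hG
    simpa [f, hu, hv] using this.reachable
  have hreach {u v : V} (w : (G.induce S).spanningCoe.Walk u v) : f u = f v := by
    induction w with
    | nil => rfl
    | cons huv _ ih => exact (hadj _ _ huv).trans ih
  have hsurj : Function.Surjective (ConnectedComponent.lift f fun _ _ w _ ↦ hreach w) := by
    rintro (c | v)
    · induction c using ConnectedComponent.ind with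
      | h v => exact ⟨connectedComponentMk _ v, by simp [f]⟩
    · exact ⟨connectedComponentMk _ v, by simp [f, show (v : V) ∉ S from v.2]⟩
  have := Nat.card_le_card_of_surjective _ hsurj
  rwa [Nat.card_sum, Nat.card_coe_set_eq] at this

theorem isVertexCover_sdiff_spanningCoe_induce {V : Type*} (G : SimpleGraph V) (S : Set V) :
    IsVertexCover (G \ (G.induce S).spanningCoe) Sᶜ := by
  intro u v huv
  by_contra! h
  simp only [Set.mem_compl_iff, not_not] at h
  exact huv.2 (by simpa [h.1, h.2] using huv.1)

end Components

theorem exists_hasGraph_sigPos_eq_sigNeg_eq {V : Type*} [Fintype V] [DecidableEq V]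
    (G : SimpleGraph V) (S : Set V) {r s : ℕ} (hr : Sᶜ.ncard ≤ r) (hs : Sᶜ.ncard ≤ s)
    (hrs : Fintype.card V + Sᶜ.ncard ≤ r + s + Nat.card (G.induce S).ConnectedComponent)
    (hrs' : r + s ≤ Fintype.card V) :
    ∃ A : Matrix V V ℝ, HasGraph A G ∧ sigPos A.toQuadraticForm' = r ∧
      sigNeg A.toQuadraticForm' = s := by
  have hcomp := card_connectedComponent_induce_add_ncard_compl_le G S
  obtain ⟨H, hHF, hpos, hneg⟩ := exists_signedLapMatrix_sigPos_le_sigNeg_le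
    (F := (G.induce S).spanningCoe) (p := r - Sᶜ.ncard) (q := s - Sᶜ.ncard) (by lia)
  obtain ⟨B, hB, hBpos, hBneg⟩ := (hasGraph_signedLapMatrix hHF).exists_of_isVertexCover
    (G.spanningCoe_induce_le S) (isVertexCover_sdiff_spanningCoe_induce G S)
  exact hB.exists_sigPos_eq_sigNeg_eq (by lia) (by lia) hrs'

theorem exists_ncard_compl_eq_card_connectedComponent_eq_MD {n k : ℕ} (G : SimpleGraph (Fin n))
    (hk : k ≤ n) : ∃ S : Set (Fin n), Sᶜ.ncard = k ∧
      Nat.card (G.induce S).ConnectedComponent = MD G k := by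
  have hne : (Finset.univ.filter fun s : Finset (Fin n) ↦ s.card = n - k).Nonempty := by
    obtain ⟨s, -, hs⟩ := Finset.exists_subset_card_eq (s := (Finset.univ : Finset (Fin n)))
      (n := n - k) (by simp)
    exact ⟨s, by simpa using hs⟩
  obtain ⟨s, hs, hsup⟩ := Finset.exists_mem_eq_sup _ hne
    fun s ↦ Nat.card (G.induce (s : Set (Fin n))).ConnectedComponent
  have hcard : s.card = n - k := by simpa using hs
  refine ⟨s, ?_, hsup.symm⟩
  rw [← Finset.coe_compl, Set.ncard_coe_finset, Finset.card_compl, Fintype.card_fin, hcard]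
  lia

theorem stmt6_general {n : ℕ} (G : SimpleGraph (Fin n)) {k r s : ℕ} (hr : k ≤ r) (hs : k ≤ s)
    (hrs : n + k ≤ r + s + MD G k) (hrs' : r + s ≤ n) :
    ∃ A : Matrix (Fin n) (Fin n) ℝ, SMat G A ∧ HasInertia A r s := by
  obtain ⟨S, rfl, hS⟩ := exists_ncard_compl_eq_card_connectedComponent_eq_MD G (k := k) (by lia)
  rw [← hS] at hrs
  obtain ⟨A, hA, rfl, rfl⟩ := exists_hasGraph_sigPos_eq_sigNeg_eq G S hr hs
    (by rwa [Fintype.card_fin]) (by rwa [Fintype.card_fin])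
  exact ⟨A, hA, hasInertia_sigPos_sigNeg hA.1⟩

/-- Stars and Stripes Lemma. -/
theorem stmt6 {n : ℕ} (G : SimpleGraph (Fin n)) (k r s : ℕ) (hk : k ≤ n)
    (hMk : k ≤ MD G k) (hr : k ≤ r) (hs : k ≤ s)
    (hrs : r + s = n - MD G k + k) :
    ∃ A : Matrix (Fin n) (Fin n) ℝ, SMat G A ∧ HasInertia A r s :=
  stmt6_general G hr hs (by lia) (by lia)
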